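/- Assume 3 ≤ a ≤ b and t ≥ p, and let x* = ((2p−5) − √((2p−5)² − 24))/12. Let s be a block array such that f_{s,k} ≤ 2 for every treatment k and every treatment is connected in s, but s ∉ M, where M = Q₀ ∪ Q₁ ∪ Q₂ ∪ Q₃ ∪ Q₄. Then there exists a block array s* ∈ M with q_{s*}(x*) > q_s(x*). -/

import Mathlib

open Matrix

namespace TwoDim

/-- The set of plots of an `a × b` block. -/
abbrev Plot (a b : ℕ) := Fin a × Fin b

/-- A block array: an assignment of one of `t` treatments to each plot. -/
abbrev BlockArray (a b t : ℕ) := Plot a b → Fin t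

/-- The all-ones matrix. -/
def Jmat (n : Type*) : Matrix n n ℝ := Matrix.of fun _ _ => 1

/-- `B_m = I - J/m`. -/
noncomputable def Bmat (n : Type*) [Fintype n] [DecidableEq n] : Matrix n n ℝ :=
  1 - ((Fintype.card n : ℝ))⁻¹ • Jmat n

variable {a b t : ℕ}

/-- The treatment incidence matrix `T_s`. -/
def Tmat (s : BlockArray a b t) : Matrix (Plot a b) (Fin t) ℝ :=
  Matrix.of fun q k => if s q = k then 1 else 0

/-- Two plots are neighbors if they agree in one coordinate and differ by 1 in the other. -/
def Neighbor (q r : Plot a b) : Prop :=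
  (q.1 = r.1 ∧ (q.2.val + 1 = r.2.val ∨ r.2.val + 1 = q.2.val)) ∨
  (q.2 = r.2 ∧ (q.1.val + 1 = r.1.val ∨ r.1.val + 1 = q.1.val))

instance (q r : Plot a b) : Decidable (Neighbor q r) := by
  unfold Neighbor; infer_instance

/-- The adjacency matrix of the neighbor relation. -/
def Mmat (a b : ℕ) : Matrix (Plot a b) (Plot a b) ℝ :=
  Matrix.of fun q r => if Neighbor q r then 1 else 0

/-- `F_s = M T_s`. -/
def Fmat (s : BlockArray a b t) : Matrix (Plot a b) (Fin t) ℝ :=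
  Mmat a b * Tmat s

/-- `B̃ = Σ⁻¹ − Σ⁻¹ J Σ⁻¹ / (1'Σ⁻¹1)`. -/
noncomputable def Btilde (Sig : Matrix (Plot a b) (Plot a b) ℝ) :
    Matrix (Plot a b) (Plot a b) ℝ :=
  Sig⁻¹ - (∑ i, ∑ j, Sig⁻¹ i j)⁻¹ • (Sig⁻¹ * Jmat (Plot a b) * Sig⁻¹)

/-- `C_{s00} = T_s' W T_s` (with `W` playing the role of `B̃`). -/
def Cs00 (W : Matrix (Plot a b) (Plot a b) ℝ) (s : BlockArray a b t) :
    Matrix (Fin t) (Fin t) ℝ := (Tmat s)ᵀ * W * Tmat s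

/-- `C_{s01} = T_s' W F_s`. -/
def Cs01 (W : Matrix (Plot a b) (Plot a b) ℝ) (s : BlockArray a b t) :
    Matrix (Fin t) (Fin t) ℝ := (Tmat s)ᵀ * W * Fmat s

/-- `C_{s11} = F_s' W F_s`. -/
def Cs11 (W : Matrix (Plot a b) (Plot a b) ℝ) (s : BlockArray a b t) :
    Matrix (Fin t) (Fin t) ℝ := (Fmat s)ᵀ * W * Fmat s

/-- `c_{s00} = tr(B_t C_{s00})`. -/
noncomputable def cs00 (W : Matrix (Plot a b) (Plot a b) ℝ) (s : BlockArray a b t) : ℝ :=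
  Matrix.trace (Bmat (Fin t) * Cs00 W s)

noncomputable def cs01 (W : Matrix (Plot a b) (Plot a b) ℝ) (s : BlockArray a b t) : ℝ :=
  Matrix.trace (Bmat (Fin t) * Cs01 W s)

noncomputable def cs11 (W : Matrix (Plot a b) (Plot a b) ℝ) (s : BlockArray a b t) : ℝ :=
  Matrix.trace (Bmat (Fin t) * Cs11 W s)

/-- The quadratic `q_s(x) = c_{s00} + 2 c_{s01} x + c_{s11} x²`. -/
noncomputable def qpoly (W : Matrix (Plot a b) (Plot a b) ℝ) (s : BlockArray a b t) (x : ℝ) : ℝ :=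
  cs00 W s + 2 * cs01 W s * x + cs11 W s * x ^ 2

/-- A measure on the set of block arrays: nonnegative weights summing to one. -/
def IsMeasure (ξ : BlockArray a b t → ℝ) : Prop :=
  (∀ s, 0 ≤ ξ s) ∧ ∑ s, ξ s = 1

noncomputable def Cm00 (W : Matrix (Plot a b) (Plot a b) ℝ) (ξ : BlockArray a b t → ℝ) :
    Matrix (Fin t) (Fin t) ℝ := ∑ s, ξ s • Cs00 W s

noncomputable def Cm01 (W : Matrix (Plot a b) (Plot a b) ℝ) (ξ : BlockArray a b t → ℝ) :
    Matrix (Fin t) (Fin t) ℝ := ∑ s, ξ s • Cs01 W s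

noncomputable def Cm11 (W : Matrix (Plot a b) (Plot a b) ℝ) (ξ : BlockArray a b t → ℝ) :
    Matrix (Fin t) (Fin t) ℝ := ∑ s, ξ s • Cs11 W s

noncomputable def cm00 (W : Matrix (Plot a b) (Plot a b) ℝ) (ξ : BlockArray a b t → ℝ) : ℝ :=
  ∑ s, ξ s * cs00 W s

noncomputable def cm01 (W : Matrix (Plot a b) (Plot a b) ℝ) (ξ : BlockArray a b t → ℝ) : ℝ :=
  ∑ s, ξ s * cs01 W s

noncomputable def cm11 (W : Matrix (Plot a b) (Plot a b) ℝ) (ξ : BlockArray a b t → ℝ) : ℝ :=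
  ∑ s, ξ s * cs11 W s

/-- `q*_ξ = c_{ξ00} − c_{ξ01}²/c_{ξ11}`. -/
noncomputable def qstar (W : Matrix (Plot a b) (Plot a b) ℝ) (ξ : BlockArray a b t → ℝ) : ℝ :=
  cm00 W ξ - (cm01 W ξ) ^ 2 / cm11 W ξ

/-- `G` is a generalized inverse of `A`. -/
def IsGenInv (A G : Matrix (Fin t) (Fin t) ℝ) : Prop := A * G * A = A

/-- Information matrix `C_{ξ00} − C_{ξ01} G C_{ξ10}` computed with a generalized inverse `G`. -/
noncomputable def InfoMat (W : Matrix (Plot a b) (Plot a b) ℝ) (ξ : BlockArray a b t → ℝ)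
    (G : Matrix (Fin t) (Fin t) ℝ) : Matrix (Fin t) (Fin t) ℝ :=
  Cm00 W ξ - Cm01 W ξ * G * (Cm01 W ξ)ᵀ

/-- A criterion `Φ` on `t×t` real symmetric matrices: concave, Loewner-nondecreasing, and
invariant under simultaneous permutations of rows and columns. -/
def GoodPhi (t : ℕ) (Φ : Matrix (Fin t) (Fin t) ℝ → ℝ) : Prop :=
  (∀ A B : Matrix (Fin t) (Fin t) ℝ, A.IsSymm → B.IsSymm → ∀ α : ℝ, 0 ≤ α → α ≤ 1 →
      α * Φ A + (1 - α) * Φ B ≤ Φ (α • A + (1 - α) • B)) ∧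
  (∀ A B : Matrix (Fin t) (Fin t) ℝ, A.IsSymm → B.IsSymm → (B - A).PosSemidef → Φ A ≤ Φ B) ∧
  (∀ (σ : Equiv.Perm (Fin t)) (C : Matrix (Fin t) (Fin t) ℝ), Φ (C.submatrix σ σ) = Φ C)

/-- Universal optimality of a measure `ξ`. -/
def UnivOptimal (W : Matrix (Plot a b) (Plot a b) ℝ) (ξ : BlockArray a b t → ℝ) : Prop :=
  ∀ η : BlockArray a b t → ℝ, IsMeasure η →
    ∀ G H : Matrix (Fin t) (Fin t) ℝ, IsGenInv (Cm11 W ξ) G → IsGenInv (Cm11 W η) H →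
      ∀ Φ : Matrix (Fin t) (Fin t) ℝ → ℝ, GoodPhi t Φ →
        Φ (InfoMat W η H) ≤ Φ (InfoMat W ξ G)

/-- A measure is symmetric if it is invariant under relabeling of the treatments. -/
def IsSymmetricMeasure (ξ : BlockArray a b t → ℝ) : Prop :=
  ∀ (σ : Equiv.Perm (Fin t)) (s : BlockArray a b t), ξ (fun q => σ (s q)) = ξ s

/-- A matrix is completely symmetric if it is of the form `αI + βJ`. -/
def ComplSym (A : Matrix (Fin t) (Fin t) ℝ) : Prop :=
  ∃ α β : ℝ, A = α • (1 : Matrix (Fin t) (Fin t) ℝ) + β • Jmat (Fin t)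

/-- A measure is pseudo symmetric if `C_{ξ00}`, `C_{ξ01}`, `C_{ξ11}` are completely symmetric. -/
def PseudoSym (W : Matrix (Plot a b) (Plot a b) ℝ) (ξ : BlockArray a b t → ℝ) : Prop :=
  ComplSym (Cm00 W ξ) ∧ ComplSym (Cm01 W ξ) ∧ ComplSym (Cm11 W ξ)

/-- `r(x) = max_{s∈S} q_s(x)`. -/
noncomputable def rfun {a b : ℕ} (t : ℕ) (W : Matrix (Plot a b) (Plot a b) ℝ) (x : ℝ) : ℝ :=
  sSup (Set.range fun s : BlockArray a b t => qpoly W s x)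

/-- `min_{s∈S} q_s(x)`. -/
noncomputable def rmin {a b : ℕ} (t : ℕ) (W : Matrix (Plot a b) (Plot a b) ℝ) (x : ℝ) : ℝ :=
  sInf (Set.range fun s : BlockArray a b t => qpoly W s x)

/-- Number of plots assigned treatment `k` by `s`. -/
noncomputable def f0 (s : BlockArray a b t) (k : Fin t) : ℕ :=
  {q : Plot a b | s q = k}.ncard

/-- Replications of `k` among the columns `1,…,b−1`. -/
noncomputable def f1 (s : BlockArray a b t) (k : Fin t) : ℕ :=
  {q : Plot a b | s q = k ∧ q.2.val + 1 < b}.ncard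

/-- Replications of `k` among the columns `2,…,b`. -/
noncomputable def f2 (s : BlockArray a b t) (k : Fin t) : ℕ :=
  {q : Plot a b | s q = k ∧ 1 ≤ q.2.val}.ncard

/-- Replications of `k` among the rows `1,…,a−1`. -/
noncomputable def f3 (s : BlockArray a b t) (k : Fin t) : ℕ :=
  {q : Plot a b | s q = k ∧ q.1.val + 1 < a}.ncard

/-- Replications of `k` among the rows `2,…,a`. -/
noncomputable def f4 (s : BlockArray a b t) (k : Fin t) : ℕ :=
  {q : Plot a b | s q = k ∧ 1 ≤ q.1.val}.ncard

noncomputable def fc (s : BlockArray a b t) : ℕ → Fin t → ℕ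
  | 0 => f0 s
  | 1 => f1 s
  | 2 => f2 s
  | 3 => f3 s
  | 4 => f4 s
  | _ => fun _ => 0

/-- `h^{uv}_s = Σ_k f^u_{s,k} f^v_{s,k}`. -/
noncomputable def hval (s : BlockArray a b t) (u v : ℕ) : ℝ :=
  ∑ k : Fin t, (fc s u k : ℝ) * (fc s v k : ℝ)

noncomputable def h00 (s : BlockArray a b t) : ℝ := hval s 0 0

noncomputable def h1 (s : BlockArray a b t) : ℝ :=
  hval s 0 1 + hval s 0 2 + hval s 0 3 + hval s 0 4

noncomputable def h2 (s : BlockArray a b t) : ℝ :=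
  hval s 1 1 + hval s 2 2 + hval s 3 3 + hval s 4 4

noncomputable def h3 (s : BlockArray a b t) : ℝ :=
  hval s 1 2 + hval s 1 3 + hval s 1 4 + hval s 2 3 + hval s 2 4 + hval s 3 4

/-- `z¹_{s,r}`: horizontally adjacent pairs of plots receiving the same treatment. -/
noncomputable def zr1 (s : BlockArray a b t) : ℕ :=
  {qr : Plot a b × Plot a b |
    qr.1.1 = qr.2.1 ∧ qr.1.2.val + 1 = qr.2.2.val ∧ s qr.1 = s qr.2}.ncard

noncomputable def zr2 (s : BlockArray a b t) : ℕ :=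
  {qr : Plot a b × Plot a b |
    qr.1.1 = qr.2.1 ∧ qr.1.2.val + 2 = qr.2.2.val ∧ s qr.1 = s qr.2}.ncard

noncomputable def zc1 (s : BlockArray a b t) : ℕ :=
  {qr : Plot a b × Plot a b |
    qr.1.2 = qr.2.2 ∧ qr.1.1.val + 1 = qr.2.1.val ∧ s qr.1 = s qr.2}.ncard

noncomputable def zc2 (s : BlockArray a b t) : ℕ :=
  {qr : Plot a b × Plot a b |
    qr.1.2 = qr.2.2 ∧ qr.1.1.val + 2 = qr.2.1.val ∧ s qr.1 = s qr.2}.ncard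

/-- pairs `(i,j)`, `(i−1,j+1)` with the same treatment. -/
noncomputable def zd1 (s : BlockArray a b t) : ℕ :=
  {qr : Plot a b × Plot a b |
    qr.2.1.val + 1 = qr.1.1.val ∧ qr.1.2.val + 1 = qr.2.2.val ∧ s qr.1 = s qr.2}.ncard

/-- pairs `(i,j)`, `(i+1,j+1)` with the same treatment. -/
noncomputable def zd2 (s : BlockArray a b t) : ℕ :=
  {qr : Plot a b × Plot a b |
    qr.1.1.val + 1 = qr.2.1.val ∧ qr.1.2.val + 1 = qr.2.2.val ∧ s qr.1 = s qr.2}.ncard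

noncomputable def z1 (s : BlockArray a b t) : ℝ := 2 * zr1 s + 2 * zc1 s

noncomputable def z2 (s : BlockArray a b t) : ℝ :=
  2 * zr2 s + 2 * zc2 s + 4 * zd1 s + 4 * zd2 s

/-- `η = 4p − 2a − 2b − 2(8ab − 7a − 7b + 4)/t + 4(2p − a − b)²/(pt)` where `p = ab`. -/
noncomputable def eta (a b t : ℕ) : ℝ :=
  4 * ((a : ℝ) * b) - 2 * a - 2 * b - 2 * (8 * (a : ℝ) * b - 7 * a - 7 * b + 4) / t +
    4 * (2 * (a : ℝ) * b - a - b) ^ 2 / (((a : ℝ) * b) * t)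

/-- A corner plot of the `a × b` block. -/
def IsCorner (q : Plot a b) : Prop :=
  (q.1.val = 0 ∨ q.1.val + 1 = a) ∧ (q.2.val = 0 ∨ q.2.val + 1 = b)

/-- Treatment `k` is significant in `s`: it occupies exactly two plots, which are
neighbors, at least one of them being a corner plot. -/
def Significant (s : BlockArray a b t) (k : Fin t) : Prop :=
  ∃ u v : Plot a b, u ≠ v ∧ {q : Plot a b | s q = k} = {u, v} ∧
    Neighbor u v ∧ (IsCorner u ∨ IsCorner v)

/-- Treatment `k` is strictly significant in `s`: both of its two plots are corners. -/
def StrictSignificant (s : BlockArray a b t) (k : Fin t) : Prop :=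
  ∃ u v : Plot a b, u ≠ v ∧ {q : Plot a b | s q = k} = {u, v} ∧
    Neighbor u v ∧ IsCorner u ∧ IsCorner v

/-- `Q_i`: block arrays with exactly `i` significant treatments in which every other
treatment appears at most once. -/
def Qset (a b t : ℕ) (i : ℕ) : Set (BlockArray a b t) :=
  {s | {k : Fin t | Significant s k}.ncard = i ∧
       ∀ k : Fin t, ¬ Significant s k → f0 s k ≤ 1}

/-- `Q_j*`: members of `Q_j` whose significant treatments are all strictly significant. -/
def QsetStar (a b t : ℕ) (j : ℕ) : Set (BlockArray a b t) :=
  {s | s ∈ Qset a b t j ∧ ∀ k : Fin t, Significant s k → StrictSignificant s k}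

/-- Treatment `k` is connected in `s`. -/
def ConnectedIn (s : BlockArray a b t) (k : Fin t) : Prop :=
  ∀ q r : Plot a b, s q = k → s r = k →
    Relation.ReflTransGen (fun u v => Neighbor u v ∧ s u = k ∧ s v = k) q r

/-!
Writing `K = (1 + xM) B_p (1 + xM)`, one has `q_s(x) = ∑ K u v ([s u = s v] - 1/t)`, the sum running
over all pairs of plots `u`, `v`. A binary array keeps only the diagonal terms of the indicator, so
it beats `s` as soon as `K` is nonpositive off the diagonal and negative at some pair of plots
sharing a treatment. With `d` the degree in the grid,
`p * K u v = p * (2 * M u v * x + (M ^ 2) u v * x ^ 2) - (1 + x * d u) * (1 + x * d v)` for `u ≠ v`.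
For plots that are not neighbors this is negative because `p * x* ≤ 1`. The grid has no triangles,
so for neighbors it is `2 * p * x - (1 + x * d u) * (1 + x * d v)`, and `x*` is the smaller root of
`2 * p * x = (1 + 2 * x) * (1 + 3 * x)`: at `x*` the entry vanishes at a corner and a neighbor of
degree `3`, and is negative when neither plot is a corner.

There are only four corners, hence at most four significant treatments, so `s` outside all the
`Q_i` repeats some treatment that is not significant. By the absence of triangles, two of its plots
are either not neighbors or neighbors away from the corners.
-/

/-! ### Pair weights on a graph -/

/-- The matrix `(1 + xA) W (1 + xA)`. For `A` the adjacency matrix of the plots, its `(u, v)` entry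
is the contribution to `q_s(x)` of the plots `u` and `v` receiving the same treatment. -/
def pairWeight {V : Type*} [Fintype V] [DecidableEq V] (A W : Matrix V V ℝ) (x : ℝ) :
    Matrix V V ℝ :=
  (1 + x • A) * W * (1 + x • A)

lemma mul_Bmat_mul_apply {l m n : Type*} [Fintype n] [DecidableEq n]
    (A : Matrix l n ℝ) (C : Matrix n m ℝ) (i : l) (j : m) :
    (A * Bmat n * C) i j =
      (A * C) i j - (Fintype.card n : ℝ)⁻¹ * ((∑ k, A i k) * ∑ k, C k j) := by
  have hJ : (A * Jmat n * C) i j = (∑ k, A i k) * ∑ k, C k j := by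
    simp [Matrix.mul_apply, Jmat, Finset.mul_sum]
  simp only [Bmat, Matrix.mul_sub, Matrix.sub_mul, Matrix.mul_one, Matrix.mul_smul,
    Matrix.smul_mul, Matrix.sub_apply, Matrix.smul_apply, hJ, smul_eq_mul]

section Graph

variable {V : Type*} [Fintype V] (G : SimpleGraph V) [DecidableRel G.Adj] {u v : V}
  {x : ℝ}

lemma sum_adjMatrix_row (u : V) : ∑ w, G.adjMatrix ℝ u w = G.degree u := by
  simpa [Matrix.mulVec, dotProduct] using G.adjMatrix_mulVec_const_apply (a := (1 : ℝ)) (v := u)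

lemma sum_adjMatrix_col (v : V) : ∑ w, G.adjMatrix ℝ w v = G.degree v := by
  simp only [← sum_adjMatrix_row, (G.isSymm_adjMatrix (α := ℝ)).apply]

lemma adjMatrix_mul_self_apply_le_degree (u v : V) :
    (G.adjMatrix ℝ * G.adjMatrix ℝ) u v ≤ G.degree u := by
  rw [SimpleGraph.adjMatrix_mul_apply, ← SimpleGraph.card_neighborFinset_eq_degree,
    ← nsmul_one, ← Finset.sum_const]
  refine Finset.sum_le_sum fun w _ ↦ ?_
  rw [SimpleGraph.adjMatrix_apply]
  split_ifs <;> norm_num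

variable {G}

lemma adjMatrix_mul_self_apply_eq_zero (hG : G.CliqueFree 3) (huv : G.Adj u v) :
    (G.adjMatrix ℝ * G.adjMatrix ℝ) u v = 0 := by
  classical
  rw [SimpleGraph.adjMatrix_mul_apply]
  refine Finset.sum_eq_zero fun w hw ↦ ?_
  rw [SimpleGraph.mem_neighborFinset] at hw
  rw [SimpleGraph.adjMatrix_apply, if_neg]
  exact fun hwv ↦ hG {u, v, w} (SimpleGraph.is3Clique_triple_iff.2 ⟨huv, hw, hwv.symm⟩)

variable [DecidableEq V]

lemma pairWeight_adjMatrix_apply (huv : u ≠ v) :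
    pairWeight (G.adjMatrix ℝ) (Bmat V) x u v =
      2 * x * G.adjMatrix ℝ u v + x ^ 2 * (G.adjMatrix ℝ * G.adjMatrix ℝ) u v -
        (Fintype.card V : ℝ)⁻¹ * ((1 + x * G.degree u) * (1 + x * G.degree v)) := by
  have hrow : ∑ w, (1 + x • G.adjMatrix ℝ) u w = 1 + x * G.degree u := by
    simp only [Matrix.add_apply, Matrix.smul_apply, smul_eq_mul, Finset.sum_add_distrib,
      ← Finset.mul_sum, sum_adjMatrix_row]
    simp [Matrix.one_apply]
  have hcol : ∑ w, (1 + x • G.adjMatrix ℝ) w v = 1 + x * G.degree v := by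
    simp only [Matrix.add_apply, Matrix.smul_apply, smul_eq_mul, Finset.sum_add_distrib,
      ← Finset.mul_sum, sum_adjMatrix_col]
    simp [Matrix.one_apply]
  have hsq : (1 + x • G.adjMatrix ℝ) * (1 + x • G.adjMatrix ℝ) =
      1 + (2 * x) • G.adjMatrix ℝ + x ^ 2 • (G.adjMatrix ℝ * G.adjMatrix ℝ) := by
    simp only [mul_add, add_mul, Matrix.mul_one, Matrix.one_mul, Matrix.smul_mul, Matrix.mul_smul]
    module
  rw [pairWeight, mul_Bmat_mul_apply, hrow, hcol, hsq]
  simp [Matrix.one_apply_ne huv]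

lemma pairWeight_eq_of_adj (hG : G.CliqueFree 3) (huv : G.Adj u v) :
    pairWeight (G.adjMatrix ℝ) (Bmat V) x u v =
      (Fintype.card V : ℝ)⁻¹ *
        (2 * Fintype.card V * x - (1 + x * G.degree u) * (1 + x * G.degree v)) := by
  have : Nonempty V := ⟨u⟩
  rw [pairWeight_adjMatrix_apply huv.ne, adjMatrix_mul_self_apply_eq_zero hG huv,
    SimpleGraph.adjMatrix_apply, if_pos huv]
  field_simp
  ring

lemma pairWeight_neg_of_not_adj (hx : 0 ≤ x) (hcard : Fintype.card V * x ≤ 1) (hne : u ≠ v)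
    (huv : ¬ G.Adj u v) : pairWeight (G.adjMatrix ℝ) (Bmat V) x u v < 0 := by
  have : Nonempty V := ⟨u⟩
  have hV : (0 : ℝ) < Fintype.card V := by exact_mod_cast Fintype.card_pos
  have hlt : Fintype.card V * (x ^ 2 * (G.adjMatrix ℝ * G.adjMatrix ℝ) u v) <
      (1 + x * G.degree u) * (1 + x * G.degree v) :=
    calc Fintype.card V * (x ^ 2 * (G.adjMatrix ℝ * G.adjMatrix ℝ) u v)
        ≤ Fintype.card V * (x ^ 2 * G.degree u) := by
          gcongr; exact adjMatrix_mul_self_apply_le_degree G u v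
      _ = Fintype.card V * x * (x * G.degree u) := by ring
      _ ≤ 1 * (x * G.degree u) := by gcongr
      _ < 1 + x * G.degree u := by linarith
      _ ≤ (1 + x * G.degree u) * (1 + x * G.degree v) :=
          le_mul_of_one_le_right (by positivity) (le_add_of_nonneg_right (by positivity))
  rw [pairWeight_adjMatrix_apply hne, SimpleGraph.adjMatrix_apply, if_neg huv, mul_zero, zero_add,
    sub_neg, inv_mul_eq_div, lt_div_iff₀' hV]
  exact hlt

end Graph

/-! ### The grid of plots -/

/-- The neighbor relation of the plots as a graph, the product of two paths. -/
def grid (a b : ℕ) : SimpleGraph (Plot a b) :=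
  (SimpleGraph.pathGraph a).boxProd (SimpleGraph.pathGraph b)

lemma grid_adj {q r : Plot a b} : (grid a b).Adj q r ↔ Neighbor q r := by
  simp only [grid, SimpleGraph.boxProd_adj, SimpleGraph.pathGraph_adj, Neighbor]
  tauto

instance : DecidableRel (grid a b).Adj := fun _ _ ↦ decidable_of_iff _ grid_adj.symm

instance (n : ℕ) : DecidableRel (SimpleGraph.pathGraph n).Adj :=
  fun _ _ ↦ decidable_of_iff _ SimpleGraph.pathGraph_adj.symm

lemma Mmat_eq_adjMatrix (a b : ℕ) : Mmat a b = (grid a b).adjMatrix ℝ := by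
  ext q r
  simp only [Mmat, Matrix.of_apply, SimpleGraph.adjMatrix_apply, grid_adj]

lemma card_plot (a b : ℕ) : (Fintype.card (Plot a b) : ℝ) = a * b := by simp

lemma grid_cliqueFree_three (a b : ℕ) : (grid a b).CliqueFree 3 := by
  intro c hc
  obtain ⟨u, v, w, huv, huw, hvw, -⟩ := SimpleGraph.is3Clique_iff.1 hc
  simp only [grid_adj, Neighbor, Fin.ext_iff] at huv huw hvw
  omega

lemma degree_grid (q : Plot a b) :
    (grid a b).degree q =
      (SimpleGraph.pathGraph a).degree q.1 + (SimpleGraph.pathGraph b).degree q.2 := by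
  unfold grid
  rw [SimpleGraph.degree_boxProd]

lemma degree_pathGraph_pos {n : ℕ} (hn : 2 ≤ n) (i : Fin n) :
    0 < (SimpleGraph.pathGraph n).degree i :=
  have : Nontrivial (Fin n) := Fin.nontrivial_iff_two_le.2 hn
  (SimpleGraph.pathGraph_preconnected n).degree_pos_of_nontrivial i

lemma two_le_degree_pathGraph {n : ℕ} {i : Fin n} (hi : ¬ (i.val = 0 ∨ i.val + 1 = n)) :
    2 ≤ (SimpleGraph.pathGraph n).degree i := by
  rw [← SimpleGraph.card_neighborFinset_eq_degree, Nat.succ_le_iff, Finset.one_lt_card]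
  refine ⟨⟨i.val - 1, by omega⟩, ?_, ⟨i.val + 1, by omega⟩, ?_, ?_⟩
  · simp only [SimpleGraph.mem_neighborFinset, SimpleGraph.pathGraph_adj]
    omega
  · simp only [SimpleGraph.mem_neighborFinset, SimpleGraph.pathGraph_adj, true_or]
  · simp only [ne_eq, Fin.mk.injEq]
    omega

lemma two_le_degree_grid (ha : 2 ≤ a) (hb : 2 ≤ b) (q : Plot a b) :
    2 ≤ (grid a b).degree q := by
  rw [degree_grid]
  exact Nat.add_le_add (degree_pathGraph_pos ha q.1) (degree_pathGraph_pos hb q.2)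

lemma three_le_degree_grid (ha : 2 ≤ a) (hb : 2 ≤ b) {q : Plot a b} (hq : ¬ IsCorner q) :
    3 ≤ (grid a b).degree q := by
  rw [degree_grid]
  rcases not_and_or.1 hq with hq | hq
  · exact Nat.add_le_add (two_le_degree_pathGraph hq) (degree_pathGraph_pos hb q.2)
  · exact Nat.add_le_add (degree_pathGraph_pos ha q.1) (two_le_degree_pathGraph hq)

lemma not_isCorner_of_neighbor (ha : 3 ≤ a) (hb : 3 ≤ b) {u v : Plot a b} (huv : Neighbor u v)
    (hu : IsCorner u) : ¬ IsCorner v := by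
  simp only [Neighbor, IsCorner, Fin.ext_iff] at *
  omega

lemma ncard_setOf_fin_end_le_two (n : ℕ) : {i : Fin n | i.val = 0 ∨ i.val + 1 = n}.ncard ≤ 2 := by
  have h_first : {i : Fin n | i.val = 0}.ncard ≤ 1 :=
    (Set.ncard_le_one (Set.toFinite _)).2 fun i (hi : i.val = 0) j (hj : j.val = 0) ↦
      Fin.ext (hi.trans hj.symm)
  have h_last : {i : Fin n | i.val + 1 = n}.ncard ≤ 1 :=
    (Set.ncard_le_one (Set.toFinite _)).2 fun i (hi : i.val + 1 = n) j (hj : j.val + 1 = n) ↦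
      Fin.ext (Nat.succ_injective (hi.trans hj.symm))
  exact (Set.ncard_union_le _ _).trans (Nat.add_le_add h_first h_last)

lemma ncard_setOf_isCorner_le_four (a b : ℕ) : {q : Plot a b | IsCorner q}.ncard ≤ 4 := by
  have hprod : {q : Plot a b | IsCorner q} =
      {i : Fin a | i.val = 0 ∨ i.val + 1 = a} ×ˢ {j : Fin b | j.val = 0 ∨ j.val + 1 = b} := rfl
  rw [hprod, Set.ncard_prod]
  exact Nat.mul_le_mul (ncard_setOf_fin_end_le_two a) (ncard_setOf_fin_end_le_two b)

/-! ### The critical point -/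

/-- The smaller root of `2 * p * x = (1 + 2 * x) * (1 + 3 * x)`, the `x*` of the theorem. -/
noncomputable def criticalPoint (p : ℝ) : ℝ :=
  ((2 * p - 5) - Real.sqrt ((2 * p - 5) ^ 2 - 24)) / 12

section CriticalPoint

variable {p x : ℝ}

lemma criticalPoint_pos (hp : 5 < 2 * p) : 0 < criticalPoint p := by
  have hlt : Real.sqrt ((2 * p - 5) ^ 2 - 24) < 2 * p - 5 :=
    (Real.sqrt_lt' (by linarith)).2 (by linarith)
  rw [criticalPoint]
  linarith

lemma two_mul_mul_le_of_le_criticalPoint (hx : x ≤ criticalPoint p) :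
    2 * p * x ≤ (1 + 2 * x) * (1 + 3 * x) := by
  have hsqrt : Real.sqrt ((2 * p - 5) ^ 2 - 24) ≤ 2 * p - 5 - 12 * x := by
    rw [criticalPoint] at hx
    linarith
  linarith [(Real.sqrt_le_iff.1 hsqrt).2]

lemma mul_criticalPoint_le_one (hp : 6 ≤ p) : p * criticalPoint p ≤ 1 := by
  have : 0 < p := by linarith
  have hsqrt : 2 * p - 5 - 12 / p ≤ Real.sqrt ((2 * p - 5) ^ 2 - 24) := by
    refine Real.le_sqrt_of_sq_le (sub_nonneg.1 ?_)
    have hfactor : (2 * p - 5) ^ 2 - 24 - (2 * p - 5 - 12 / p) ^ 2 =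
        24 * (p - 6) * (p + 1) / p ^ 2 := by
      field_simp
      ring
    rw [hfactor]
    have : 0 ≤ p - 6 := by linarith
    positivity
  calc p * criticalPoint p ≤ p * (12 / p / 12) := by
        rw [criticalPoint]
        gcongr
        linarith
    _ = 1 := by field_simp

end CriticalPoint

section GridWeight

variable {u v : Plot a b} {x : ℝ}

lemma pairWeight_grid_nonpos_of_neighbor (ha : 3 ≤ a) (hb : 3 ≤ b) (hx₀ : 0 < x)
    (hx : x ≤ criticalPoint (a * b)) (huv : Neighbor u v) :
    pairWeight (Mmat a b) (Bmat (Plot a b)) x u v ≤ 0 := by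
  have two_le (q : Plot a b) : (2 : ℝ) ≤ (grid a b).degree q := by
    exact_mod_cast two_le_degree_grid (by omega) (by omega) q
  have three_le {q : Plot a b} (hq : ¬ IsCorner q) : (3 : ℝ) ≤ (grid a b).degree q := by
    exact_mod_cast three_le_degree_grid (by omega) (by omega) hq
  have hdeg : (1 + 2 * x) * (1 + 3 * x) ≤
      (1 + x * (grid a b).degree u) * (1 + x * (grid a b).degree v) := by
    by_cases hu : IsCorner u
    · have hv := three_le (not_isCorner_of_neighbor ha hb huv hu)
      rw [mul_comm 2, mul_comm 3]
      gcongr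
      exact two_le u
    · have hu := three_le hu
      rw [mul_comm, mul_comm 2, mul_comm 3]
      gcongr
      exact two_le v
  rw [Mmat_eq_adjMatrix, pairWeight_eq_of_adj (grid_cliqueFree_three a b) (grid_adj.2 huv),
    card_plot]
  refine mul_nonpos_of_nonneg_of_nonpos (by positivity) (sub_nonpos.2 ?_)
  exact (two_mul_mul_le_of_le_criticalPoint hx).trans hdeg

lemma pairWeight_grid_neg_of_not_neighbor (hab : 6 ≤ a * b) (hx₀ : 0 ≤ x)
    (hx : x ≤ criticalPoint (a * b)) (hne : u ≠ v) (huv : ¬ Neighbor u v) :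
    pairWeight (Mmat a b) (Bmat (Plot a b)) x u v < 0 := by
  have hab' : (6 : ℝ) ≤ a * b := by exact_mod_cast hab
  rw [Mmat_eq_adjMatrix]
  refine pairWeight_neg_of_not_adj hx₀ ?_ hne (mt grid_adj.1 huv)
  rw [card_plot]
  calc (a * b : ℝ) * x ≤ a * b * criticalPoint (a * b) := by gcongr
    _ ≤ 1 := mul_criticalPoint_le_one hab'

lemma pairWeight_grid_neg_of_neighbor (ha : 2 ≤ a) (hb : 2 ≤ b) (hx₀ : 0 < x)
    (hx : x ≤ criticalPoint (a * b)) (huv : Neighbor u v) (hu : ¬ IsCorner u)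
    (hv : ¬ IsCorner v) : pairWeight (Mmat a b) (Bmat (Plot a b)) x u v < 0 := by
  have three_le {q : Plot a b} (hq : ¬ IsCorner q) : (3 : ℝ) ≤ (grid a b).degree q := by
    exact_mod_cast three_le_degree_grid ha hb hq
  have hlt : 2 * (a * b) * x <
      (1 + x * (grid a b).degree u) * (1 + x * (grid a b).degree v) :=
    calc 2 * (a * b) * x ≤ (1 + x * 2) * (1 + x * 3) := by
          linarith [two_mul_mul_le_of_le_criticalPoint hx]
      _ < (1 + x * 3) * (1 + x * 3) := by
        gcongr
        norm_num
      _ ≤ _ := by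
        gcongr
        · exact three_le hu
        · exact three_le hv
  rw [Mmat_eq_adjMatrix, pairWeight_eq_of_adj (grid_cliqueFree_three a b) (grid_adj.2 huv),
    card_plot]
  exact mul_neg_of_pos_of_neg (by positivity) (sub_neg.2 hlt)

lemma pairWeight_grid_nonpos (ha : 3 ≤ a) (hb : 3 ≤ b) (hx₀ : 0 < x)
    (hx : x ≤ criticalPoint (a * b)) (huv : u ≠ v) :
    pairWeight (Mmat a b) (Bmat (Plot a b)) x u v ≤ 0 := by
  by_cases h : Neighbor u v
  · exact pairWeight_grid_nonpos_of_neighbor ha hb hx₀ hx h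
  · exact (pairWeight_grid_neg_of_not_neighbor (by nlinarith) hx₀.le hx huv h).le

lemma pairWeight_grid_neg (ha : 3 ≤ a) (hb : 3 ≤ b) (hx₀ : 0 < x)
    (hx : x ≤ criticalPoint (a * b)) (huv : u ≠ v)
    (hcorner : Neighbor u v → ¬ IsCorner u ∧ ¬ IsCorner v) :
    pairWeight (Mmat a b) (Bmat (Plot a b)) x u v < 0 := by
  by_cases h : Neighbor u v
  · obtain ⟨hu, hv⟩ := hcorner h
    exact pairWeight_grid_neg_of_neighbor (by omega) (by omega) hx₀ hx h hu hv
  · exact pairWeight_grid_neg_of_not_neighbor (by nlinarith) hx₀.le hx huv h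

end GridWeight

/-! ### Comparison with binary arrays -/

section Comparison

variable {W : Matrix (Plot a b) (Plot a b) ℝ} {s e : BlockArray a b t} {x : ℝ}

lemma Bmat_isSymm (n : Type*) [Fintype n] [DecidableEq n] : (Bmat n).IsSymm := by
  ext i j
  simp [Bmat, Jmat, Matrix.one_apply, eq_comm]

lemma Mmat_isSymm (a b : ℕ) : (Mmat a b).IsSymm := by
  rw [Mmat_eq_adjMatrix]
  exact (grid a b).isSymm_adjMatrix

lemma Tmat_mul_Bmat_mul_transpose_apply (s : BlockArray a b t) (u v : Plot a b) :
    (Tmat s * Bmat (Fin t) * (Tmat s)ᵀ) u v = (if s u = s v then 1 else 0) - (t : ℝ)⁻¹ := by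
  rw [mul_Bmat_mul_apply]
  simp [Matrix.mul_apply, Tmat]

lemma qpoly_eq_trace (hW : W.IsSymm) (s : BlockArray a b t) (x : ℝ) :
    qpoly W s x =
      (pairWeight (Mmat a b) W x * (Tmat s * Bmat (Fin t) * (Tmat s)ᵀ)).trace := by
  have cycle (X : Matrix (Plot a b) (Plot a b) ℝ) :
      (X * (Tmat s * Bmat (Fin t) * (Tmat s)ᵀ)).trace =
        (Bmat (Fin t) * ((Tmat s)ᵀ * X * Tmat s)).trace := by
    rw [Matrix.mul_assoc (Tmat s), ← Matrix.mul_assoc X, Matrix.trace_mul_comm]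
    simp only [Matrix.mul_assoc]
  have h₀₁ : cs01 W s = (Bmat (Fin t) * ((Fmat s)ᵀ * W * Tmat s)).trace := by
    rw [cs01, Cs01, ← Matrix.trace_transpose, Matrix.transpose_mul, Matrix.trace_mul_comm]
    simp only [Matrix.transpose_mul, Matrix.transpose_transpose, hW.eq, (Bmat_isSymm _).eq,
      Matrix.mul_assoc]
  have hquad : (Tmat s)ᵀ * pairWeight (Mmat a b) W x * Tmat s =
      Cs00 W s + x • (Cs01 W s + (Fmat s)ᵀ * W * Tmat s) + x ^ 2 • Cs11 W s := by
    simp only [pairWeight, Cs00, Cs01, Cs11, Fmat, Matrix.transpose_mul, (Mmat_isSymm a b).eq,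
      Matrix.add_mul, Matrix.mul_add, Matrix.one_mul, Matrix.mul_one, Matrix.smul_mul,
      Matrix.mul_smul, Matrix.mul_assoc]
    module
  rw [cycle, hquad]
  simp only [Matrix.mul_add, Matrix.mul_smul, Matrix.trace_add, Matrix.trace_smul, smul_eq_mul,
    ← h₀₁]
  simp only [qpoly, cs00, cs01, cs11]
  ring

lemma qpoly_eq_sum (hW : W.IsSymm) (s : BlockArray a b t) (x : ℝ) :
    qpoly W s x = ∑ u, ∑ v,
      pairWeight (Mmat a b) W x u v * ((if s v = s u then 1 else 0) - (t : ℝ)⁻¹) := by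
  rw [qpoly_eq_trace hW, Matrix.trace]
  refine Finset.sum_congr rfl fun u _ ↦ ?_
  simp only [Matrix.diag_apply, Matrix.mul_apply (M := pairWeight (Mmat a b) W x),
    Tmat_mul_Bmat_mul_transpose_apply]

lemma qpoly_lt_qpoly_of_injective (hW : W.IsSymm) (he : Function.Injective e)
    (hle : ∀ u v, u ≠ v → pairWeight (Mmat a b) W x u v ≤ 0) {u v : Plot a b} (huv : u ≠ v)
    (hs : s u = s v) (hlt : pairWeight (Mmat a b) W x u v < 0) :
    qpoly W s x < qpoly W e x := by
  have hterm (q r : Plot a b) :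
      pairWeight (Mmat a b) W x q r * ((if s r = s q then 1 else 0) - (t : ℝ)⁻¹) ≤
        pairWeight (Mmat a b) W x q r * ((if e r = e q then 1 else 0) - (t : ℝ)⁻¹) := by
    rcases eq_or_ne q r with rfl | hqr
    · simp
    · rw [if_neg (he.ne hqr.symm)]
      refine mul_le_mul_of_nonpos_left (sub_le_sub_right ?_ _) (hle q r hqr)
      split_ifs <;> norm_num
  have hterm_lt :
      pairWeight (Mmat a b) W x u v * ((if s v = s u then 1 else 0) - (t : ℝ)⁻¹) <
        pairWeight (Mmat a b) W x u v * ((if e v = e u then 1 else 0) - (t : ℝ)⁻¹) := by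
    rw [if_pos hs.symm, if_neg (he.ne huv.symm)]
    exact mul_lt_mul_of_neg_left (sub_lt_sub_right one_pos _) hlt
  rw [qpoly_eq_sum hW, qpoly_eq_sum hW]
  exact Finset.sum_lt_sum (fun q _ ↦ Finset.sum_le_sum fun r _ ↦ hterm q r)
    ⟨u, Finset.mem_univ u, Finset.sum_lt_sum (fun r _ ↦ hterm u r) ⟨v, Finset.mem_univ v, hterm_lt⟩⟩

lemma ncard_significant_le_four (s : BlockArray a b t) :
    {k : Fin t | Significant s k}.ncard ≤ 4 := by
  have hsub : {k : Fin t | Significant s k} ⊆ s '' {q : Plot a b | IsCorner q} := by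
    rintro k ⟨u, v, -, hset, -, hu | hv⟩
    · exact ⟨u, hu, hset.ge (Set.mem_insert u _)⟩
    · exact ⟨v, hv, hset.ge (Set.mem_insert_of_mem u rfl)⟩
  exact (Set.ncard_le_ncard hsub).trans
    ((Set.ncard_image_le).trans (ncard_setOf_isCorner_le_four a b))

lemma mem_Qset_zero_of_injective (he : Function.Injective e) : e ∈ Qset a b t 0 := by
  have hnot (k : Fin t) : ¬ Significant e k := by
    rintro ⟨u, v, huv, hset, -⟩
    exact huv (he ((hset.ge (Set.mem_insert u _)).trans
      (hset.ge (Set.mem_insert_of_mem u rfl)).symm))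
  refine ⟨by simp [hnot], fun k _ ↦ (Set.ncard_le_one (Set.toFinite _)).2 fun q hq r hr ↦ ?_⟩
  exact he (Eq.trans hq hr.symm)

lemma exists_not_significant_of_notMem_Qset
    (hs : s ∉ Qset a b t 0 ∪ Qset a b t 1 ∪ Qset a b t 2 ∪ Qset a b t 3 ∪ Qset a b t 4) :
    ∃ k, ¬ Significant s k ∧ 1 < f0 s k := by
  by_contra! hall
  have hmem : s ∈ Qset a b t {k : Fin t | Significant s k}.ncard := ⟨rfl, hall⟩
  have hcard := ncard_significant_le_four s
  simp only [Set.mem_union, not_or] at hs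
  interval_cases {k : Fin t | Significant s k}.ncard <;> simp_all

lemma exists_pair_of_not_significant {k : Fin t} (hk : ¬ Significant s k) (hf : 1 < f0 s k) :
    ∃ u v, u ≠ v ∧ s u = k ∧ s v = k ∧ (Neighbor u v → ¬ IsCorner u ∧ ¬ IsCorner v) := by
  by_contra! hcorner
  have hneighbor {u v : Plot a b} (huv : u ≠ v) (hu : s u = k) (hv : s v = k) : Neighbor u v :=
    (hcorner u v huv hu hv).1
  obtain ⟨u, hu, v, hv, huv⟩ := (Set.one_lt_ncard (Set.toFinite _)).1 hf
  have hset : {q : Plot a b | s q = k} = {u, v} := by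
    refine Set.Subset.antisymm (fun w hw ↦ ?_) (Set.pair_subset hu hv)
    by_contra hwuv
    obtain ⟨hwu, hwv⟩ := not_or.1 hwuv
    exact grid_cliqueFree_three a b {u, v, w} (SimpleGraph.is3Clique_triple_iff.2
      ⟨grid_adj.2 (hneighbor huv hu hv), grid_adj.2 (hneighbor (Ne.symm hwu) hu hw),
        grid_adj.2 (hneighbor (Ne.symm hwv) hv hw)⟩)
  exact hk ⟨u, v, huv, hset, hneighbor huv hu hv, or_iff_not_imp_left.2 (hcorner u v huv hu hv).2⟩

end Comparison

theorem connected_not_M_beaten_general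
    (a b t : ℕ) (ha : 3 ≤ a) (hb : 3 ≤ b) (ht : a * b ≤ t)
    (x : ℝ) (hx₀ : 0 < x)
    (hx : x ≤ criticalPoint (a * b))
    (s : BlockArray a b t)
    (hnot : s ∉ Qset a b t 0 ∪ Qset a b t 1 ∪ Qset a b t 2 ∪ Qset a b t 3 ∪ Qset a b t 4) :
    ∃ sstar ∈ Qset a b t 0,
      qpoly (Bmat (Plot a b)) s x < qpoly (Bmat (Plot a b)) sstar x := by
  obtain ⟨e⟩ : Nonempty (Plot a b ↪ Fin t) :=
    Function.Embedding.nonempty_of_card_le (by simpa using ht)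
  obtain ⟨k, hk, hf⟩ := exists_not_significant_of_notMem_Qset hnot
  obtain ⟨u, v, huv, hu, hv, hcorner⟩ := exists_pair_of_not_significant hk hf
  refine ⟨e, mem_Qset_zero_of_injective e.injective, ?_⟩
  exact qpoly_lt_qpoly_of_injective (Bmat_isSymm _) e.injective
    (fun _ _ ↦ pairWeight_grid_nonpos ha hb hx₀ hx) huv (hu.trans hv.symm)
    (pairWeight_grid_neg ha hb hx₀ hx huv hcorner)

/-- Lemma `lemma 333`: for `t ≥ p` and `a ≥ 3`, any array with all
replications at most `2` and all treatments connected which is not in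
`M = Q₀ ∪ Q₁ ∪ Q₂ ∪ Q₃ ∪ Q₄` is strictly beaten at `x*` by some array of `M`. -/
theorem connected_not_M_beaten
    (a b t : ℕ) (ha : 3 ≤ a) (hab : a ≤ b) (ht : a * b ≤ t)
    (xstar : ℝ)
    (hx : xstar = ((2 * ((a : ℝ) * b) - 5) -
        Real.sqrt ((2 * ((a : ℝ) * b) - 5) ^ 2 - 24)) / 12)
    (s : BlockArray a b t)
    (hf : ∀ k : Fin t, f0 s k ≤ 2)
    (hconn : ∀ k : Fin t, ConnectedIn s k)
    (hnot : s ∉ Qset a b t 0 ∪ Qset a b t 1 ∪ Qset a b t 2 ∪ Qset a b t 3 ∪ Qset a b t 4) :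
    ∃ sstar ∈ Qset a b t 0 ∪ Qset a b t 1 ∪ Qset a b t 2 ∪ Qset a b t 3 ∪ Qset a b t 4,
      qpoly (Bmat (Plot a b)) s xstar < qpoly (Bmat (Plot a b)) sstar xstar := by
  subst hx
  have hp : (9 : ℝ) ≤ a * b := by exact_mod_cast Nat.mul_le_mul ha (ha.trans hab)
  obtain ⟨e, he, hlt⟩ := connected_not_M_beaten_general a b t ha (ha.trans hab) ht _
    (criticalPoint_pos (p := a * b) (by linarith)) le_rfl s hnot
  exact ⟨e, by simp [he], hlt⟩

end TwoDim
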